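/- arXiv:math/0009090 — 3 statements merged into one kernel-verified Lean document; each statement's English description precedes it below -/
import Mathlib

section
/- Define g_1 = 3, g_2 = 2, and g_n = 2·g_{n−2} + 1 for n ≥ 3. Let x be the infinite binary word x = 0 0 1 0 0 1^{g_1} 0 1^{g_2} 0 1^{g_3} 0 ⋯ (that is, after the prefix 00100 the word consists of the blocks 1^{g_n} for n = 1, 2, 3, …, each followed by a single 0). Then for all i, j with 2 ≤ i < j, the word x[i..2i] is not a factor of x[j..2j]. -/
/-- The factor `x[a..b]` of a 1-indexed infinite word `x`. -/
def extractInf {α : Type*} (x : ℕ → α) (a b : ℕ) : List α :=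
  (List.range (b + 1 - a)).map (fun k => x (a + k))

/-- If `x[a..b]` is a factor of `x[c..e]`, it occurs in `x` at some position `c + o`. -/
lemma exists_offset_of_extractInf_infix {α : Type*} {x : ℕ → α} {a b c e : ℕ}
    (h : extractInf x a b <:+: extractInf x c e) :
    ∃ o, ∀ p, a ≤ p → p ≤ b → x (c + o + (p - a)) = x p := by
  obtain ⟨s, t, h⟩ := h
  refine ⟨s.length, fun p hap hpb => ?_⟩
  have hlen : (p - a) < (extractInf x a b).length := by simp [extractInf]; omega
  have hget := congrArg (fun l => l[s.length + (p - a)]?) h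
  have hlt : s.length + (p - a) < (extractInf x c e).length := by
    rw [← h]; simp only [List.length_append]; omega
  simp only [List.append_assoc, List.getElem?_append_right (Nat.le_add_right _ _),
    Nat.add_sub_cancel_left, List.getElem?_append_left hlen,
    List.getElem?_eq_getElem hlen, List.getElem?_eq_getElem hlt] at hget
  simp only [extractInf, List.getElem_map, List.getElem_range, Option.some.injEq] at hget
  rw [Nat.add_assoc, ← hget, Nat.add_sub_cancel' hap]

/-- The positions `2, 4, 5, 9, 12, 20, …` of the zeros of the word, the first one omitted. -/
def zeroPos : ℕ → ℕ
  | 0 => 2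
  | 1 => 4
  | 2 => 5
  | 3 => 9
  | n + 4 => 2 * zeroPos (n + 2) + 2

lemma zeroPos_add_two_le (n : ℕ) : zeroPos (n + 2) ≤ 2 * zeroPos n + 2 := by
  match n with
  | 0 => simp [zeroPos]
  | 1 => simp [zeroPos]
  | n + 2 => exact le_of_eq rfl

lemma zeroPos_strictMono : StrictMono zeroPos := by
  refine strictMono_nat_of_lt_succ fun n => ?_
  induction n using Nat.strong_induction_on with
  | _ n ih =>
    match n with
    | 0 | 1 | 2 | 3 => simp [zeroPos]
    | n + 4 =>
      have := ih (n + 2) (by omega)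
      simp only [zeroPos, Nat.add_assoc, Nat.reduceAdd] at *
      omega

/-- The distance from a zero to the next one. -/
def zeroGap (n : ℕ) : ℕ := zeroPos (n + 1) - zeroPos n

lemma zeroGap_add_four (n : ℕ) : zeroGap (n + 4) = 2 * zeroGap (n + 2) := by
  simp only [zeroGap, zeroPos, Nat.add_assoc, Nat.reduceAdd]
  omega

lemma zeroGap_lt_and_ne (n : ℕ) :
    zeroGap n < zeroGap (n + 2) ∧ zeroGap n < zeroGap (n + 3) ∧
      zeroGap n ≠ zeroGap (n + 1) := by
  induction n using Nat.strong_induction_on with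
  | _ n ih =>
    match n with
    | 0 | 1 | 2 | 3 => simp [zeroGap, zeroPos]
    | n + 4 =>
      have := ih (n + 2) (by omega)
      have h₀ := zeroGap_add_four n
      have h₁ := zeroGap_add_four (n + 1)
      have h₂ := zeroGap_add_four (n + 2)
      have h₃ := zeroGap_add_four (n + 3)
      simp only [Nat.add_assoc, Nat.reduceAdd] at *
      omega

lemma zeroGap_lt_add_two (n k : ℕ) : zeroGap n < zeroGap (n + k + 2) := by
  induction k using Nat.twoStepInduction with
  | zero => exact (zeroGap_lt_and_ne n).1
  | one => exact (zeroGap_lt_and_ne n).2.1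
  | more k ih _ => exact ih.trans (zeroGap_lt_and_ne (n + k + 2)).1

lemma zeroGap_injective : Function.Injective zeroGap := by
  refine Function.Injective.of_lt_imp_ne fun n m hnm => ?_
  obtain ⟨k, rfl⟩ := Nat.exists_eq_add_of_lt hnm
  match k with
  | 0 => exact (zeroGap_lt_and_ne n).2.2
  | k + 1 => exact (zeroGap_lt_add_two n k).ne

lemma zeroPos_eq_sum {g : ℕ → ℕ} (hg1 : g 1 = 3) (hg2 : g 2 = 2)
    (hgrec : ∀ n : ℕ, 1 ≤ n → g (n + 2) = 2 * g n + 1) (k : ℕ) :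
    zeroPos (k + 2) = 5 + ∑ m ∈ Finset.Icc 1 k, (g m + 1) := by
  have hstep (k : ℕ) : zeroPos (k + 3) = zeroPos (k + 2) + (g (k + 1) + 1) := by
    induction k using Nat.twoStepInduction with
    | zero => simp [zeroPos, hg1]
    | one => simp [zeroPos, hg2]
    | more k ih _ =>
      have := hgrec (k + 1) (by omega)
      simp only [zeroPos, Nat.add_assoc, Nat.reduceAdd] at *
      omega
  induction k with
  | zero => simp [zeroPos]
  | succ k ih => rw [Finset.sum_Icc_succ_top (by omega), ← Nat.add_assoc, ← ih]; exact hstep k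

/-- For `2 ≤ i`, the interval `[i, 2 * i]` contains two consecutive zeros. -/
lemma exists_zeroPos_mem {i : ℕ} (hi : 2 ≤ i) :
    ∃ n, i ≤ zeroPos n ∧ zeroPos (n + 1) ≤ 2 * i := by
  have hex : ∃ n, i ≤ zeroPos n := ⟨i, zeroPos_strictMono.le_apply⟩
  classical
  refine ⟨Nat.find hex, Nat.find_spec hex, ?_⟩
  cases hN : Nat.find hex with
  | zero => simp only [zeroPos]; omega
  | succ M =>
    have hM := Nat.find_min hex (m := M) (by omega)
    have := zeroPos_add_two_le M
    simp only [Nat.add_assoc, Nat.reduceAdd]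
    omega

theorem stmt_13 (g : ℕ → ℕ) (x : ℕ → Fin 2)
    (hg1 : g 1 = 3) (hg2 : g 2 = 2)
    (hgrec : ∀ n : ℕ, 1 ≤ n → g (n + 2) = 2 * g n + 1)
    -- `x = 00100 1^{g 1} 0 1^{g 2} 0 1^{g 3} 0 ⋯` (1-indexed): the letter at
    -- position `p ≥ 1` is `0` exactly when `p ∈ {1,2,4,5}` or `p` is the position
    -- `5 + ∑_{m=1}^{k} (g m + 1)` of the `0` following the block `1^{g k}`.
    (hx : ∀ p : ℕ, 1 ≤ p →
      (x p = 0 ↔ (p = 1 ∨ p = 2 ∨ p = 4 ∨ p = 5 ∨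
        ∃ k : ℕ, 1 ≤ k ∧ p = 5 + ∑ m ∈ Finset.Icc 1 k, (g m + 1)))) :
    ∀ i j : ℕ, 2 ≤ i → i < j →
      ¬ (extractInf x i (2 * i) <:+: extractInf x j (2 * j)) := by
  intro i j hi hij hinf
  have hzero (p : ℕ) (hp : 2 ≤ p) : x p = 0 ↔ ∃ n, p = zeroPos n := by
    rw [hx p (by omega)]
    constructor
    · rintro (h | h | h | h | ⟨k, -, h⟩)
      · omega
      · exact ⟨0, h⟩
      · exact ⟨1, h⟩
      · exact ⟨2, h⟩
      · exact ⟨k + 2, h.trans (zeroPos_eq_sum hg1 hg2 hgrec k).symm⟩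
    · rintro ⟨n, rfl⟩
      match n with
      | 0 | 1 | 2 => simp [zeroPos]
      | n + 3 =>
        exact .inr (.inr (.inr (.inr ⟨n + 1, by omega, zeroPos_eq_sum hg1 hg2 hgrec (n + 1)⟩)))
  obtain ⟨o, ho⟩ := exists_offset_of_extractInf_infix hinf
  obtain ⟨d, hd⟩ := Nat.exists_eq_add_of_lt (show i < j + o by omega)
  have hshift (p : ℕ) (hp : i ≤ p) (hp' : p ≤ 2 * i) : x (p + (d + 1)) = x p := by
    rw [← ho p hp hp']
    congr 1
    omega
  obtain ⟨n, hn, hn'⟩ := exists_zeroPos_mem hi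
  have hlt : zeroPos n < zeroPos (n + 1) := zeroPos_strictMono n.lt_succ_self
  obtain ⟨a, ha⟩ := (hzero (zeroPos n + (d + 1)) (by omega)).1
    ((hshift _ hn (by omega)).trans ((hzero _ (by omega)).2 ⟨n, rfl⟩))
  obtain ⟨b, hb⟩ := (hzero (zeroPos (n + 1) + (d + 1)) (by omega)).1
    ((hshift _ (by omega) hn').trans ((hzero _ (by omega)).2 ⟨n + 1, rfl⟩))
  have hab : a < b := zeroPos_strictMono.lt_iff_lt.1 (by omega)
  have hsucc : b = a + 1 := by
    by_contra hne
    have h₁ : zeroPos a < zeroPos (a + 1) := zeroPos_strictMono a.lt_succ_self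
    have h₂ : zeroPos (a + 1) < zeroPos b := zeroPos_strictMono (by omega)
    have hs := hshift (zeroPos (a + 1) - (d + 1)) (by omega) (by omega)
    rw [Nat.sub_add_cancel (by omega), (hzero _ (by omega)).2 ⟨a + 1, rfl⟩] at hs
    obtain ⟨c, hc⟩ := (hzero _ (by omega)).1 hs.symm
    have h₃ : n < c := zeroPos_strictMono.lt_iff_lt.1 (by omega)
    have h₄ : c < n + 1 := zeroPos_strictMono.lt_iff_lt.1 (by omega)
    omega
  subst hsucc
  have hna : n = a := zeroGap_injective (by simp only [zeroGap]; omega)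
  subst hna
  omega
end

section
/- Define g_1 = 3, g_2 = 2, and g_n = 2·g_{n−2} + 1 for n ≥ 3. Let x be the infinite binary word x = 0 0 1 0 0 1^{g_1} 0 1^{g_2} 0 1^{g_3} 0 ⋯ (that is, after the prefix 00100 the word consists of the blocks 1^{g_n} for n = 1, 2, 3, …, each followed by a single 0). Then for every i ≥ 2, the factor x[i..2i] contains exactly two occurrences of the letter 0. -/
/-- Sliding the window `x[i..2i]` to `x[i+1..2i+2]` drops `x i` and appends two letters. -/
theorem count_extractInf_succ {α : Type*} [DecidableEq α] (x : ℕ → α) (a : α) (i : ℕ) :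
    (extractInf x (i + 1) (2 * (i + 1))).count a + [x i].count a =
      (extractInf x i (2 * i)).count a + [x (2 * i + 1), x (2 * i + 2)].count a := by
  have hold : extractInf x i (2 * i) =
      [x i] ++ (List.range i).map (fun k => x (i + 1 + k)) := by
    rw [extractInf, show 2 * i + 1 - i = i + 1 by omega, List.range_succ_eq_map]
    simp [Function.comp_def, add_assoc, add_comm 1]
  have hnew : extractInf x (i + 1) (2 * (i + 1)) =
      (List.range i).map (fun k => x (i + 1 + k)) ++ [x (2 * i + 1), x (2 * i + 2)] := by
    rw [extractInf, show 2 * (i + 1) + 1 - (i + 1) = i + 1 + 1 by omega,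
      List.range_succ, List.range_succ]
    simp [show i + 1 + i = 2 * i + 1 by omega, show i + 1 + (i + 1) = 2 * i + 2 by omega]
  rw [hold, hnew, List.count_append, List.count_append]
  omega

/-- The positions of the zeros satisfy `P (k + 2) = 2 * P k + 2`. -/
theorem zero_position_add_two (g : ℕ → ℕ) (hg1 : g 1 = 3) (hg2 : g 2 = 2)
    (hgrec : ∀ n : ℕ, 1 ≤ n → g (n + 2) = 2 * g n + 1) (k : ℕ) :
    5 + ∑ m ∈ Finset.Icc 1 (k + 2), (g m + 1) =
      2 * (5 + ∑ m ∈ Finset.Icc 1 k, (g m + 1)) + 2 := by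
  induction k with
  | zero => simp [Finset.sum_Icc_succ_top, hg1, hg2]
  | succ k ih =>
    rw [Finset.sum_Icc_succ_top (by omega : 1 ≤ k + 2 + 1),
      Finset.sum_Icc_succ_top (by omega : 1 ≤ k + 1)]
    have := hgrec (k + 1) (by omega)
    rw [show k + 2 + 1 = k + 1 + 2 by omega]
    omega

theorem stmt_14 (g : ℕ → ℕ) (x : ℕ → Fin 2)
    (hg1 : g 1 = 3) (hg2 : g 2 = 2)
    (hgrec : ∀ n : ℕ, 1 ≤ n → g (n + 2) = 2 * g n + 1)
    -- `x = 00100 1^{g 1} 0 1^{g 2} 0 1^{g 3} 0 ⋯` (1-indexed): the letter at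
    -- position `p ≥ 1` is `0` exactly when `p ∈ {1,2,4,5}` or `p` is the position
    -- `5 + ∑_{m=1}^{k} (g m + 1)` of the `0` following the block `1^{g k}`.
    (hx : ∀ p : ℕ, 1 ≤ p →
      (x p = 0 ↔ (p = 1 ∨ p = 2 ∨ p = 4 ∨ p = 5 ∨
        ∃ k : ℕ, 1 ≤ k ∧ p = 5 + ∑ m ∈ Finset.Icc 1 k, (g m + 1)))) :
    ∀ i : ℕ, 2 ≤ i → (extractInf x i (2 * i)).count (0 : Fin 2) = 2 := by
  have hrec := zero_position_add_two g hg1 hg2 hgrec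
  generalize hP : (fun k => 5 + ∑ m ∈ Finset.Icc 1 k, (g m + 1)) = P
  have hPk (k : ℕ) : 5 + ∑ m ∈ Finset.Icc 1 k, (g m + 1) = P k := congrFun hP k
  simp only [hPk] at hrec hx
  have hP0 : P 0 = 5 := by simp [← hPk]
  have hP1 : P 1 = 9 := by simp [← hPk, hg1]
  have hP5 (k : ℕ) : 5 ≤ P k := by rw [← hPk]; omega
  have hP9 (k : ℕ) (hk : 1 ≤ k) : 9 ≤ P k := by
    obtain ⟨_ | k, rfl⟩ := Nat.exists_eq_add_of_le' hk
    · exact hP1.ge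
    · have := hrec k
      have := hP5 k
      show 9 ≤ P (k + 2)
      omega
  have hzero (p : ℕ) (hp : 5 ≤ p) : x p = 0 ↔ ∃ k, p = P k := by
    rw [hx p (by omega)]
    constructor
    · rintro (h | h | h | h | ⟨k, -, h⟩)
      iterate 3 omega
      · exact ⟨0, h.trans hP0.symm⟩
      · exact ⟨k, h⟩
    · rintro ⟨_ | k, h⟩
      · omega
      · exact .inr (.inr (.inr (.inr ⟨k + 1, by omega, h⟩)))
  have hsmall (p : ℕ) (hp : 1 ≤ p) (hp9 : p < 9) :
      x p = 0 ↔ p = 1 ∨ p = 2 ∨ p = 4 ∨ p = 5 := by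
    rw [hx p hp]
    constructor
    · rintro (h | h | h | h | ⟨k, hk, h⟩)
      iterate 4 omega
      · have := hP9 k hk
        omega
    · tauto
  have hodd (i : ℕ) (hi : 5 ≤ i) : x (2 * i + 1) ≠ 0 := by
    rw [Ne, hzero _ (by omega)]
    rintro ⟨_ | _ | k, h⟩
    · omega
    · simp only [zero_add] at h
      omega
    · have := hrec k
      simp only [add_assoc, Nat.reduceAdd] at h
      omega
  have heven (i : ℕ) (hi : 4 ≤ i) : x (2 * i + 2) = 0 ↔ ∃ k, i = P k := by
    rw [hzero _ (by omega)]
    constructor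
    · rintro ⟨_ | _ | k, h⟩
      · omega
      · simp only [zero_add] at h
        omega
      · have := hrec k
        simp only [add_assoc, Nat.reduceAdd] at h
        exact ⟨k, by omega⟩
    · rintro ⟨k, h⟩
      exact ⟨k + 2, by rw [hrec, h]⟩
  have hstep (i : ℕ) (hi : 2 ≤ i) :
      [x i].count 0 = [x (2 * i + 1), x (2 * i + 2)].count 0 := by
    simp only [List.count_cons, List.count_nil, beq_iff_eq]
    obtain hi5 | hi5 := le_or_gt 5 i
    · simp [hodd i hi5, (heven i (by omega)).trans (hzero i hi5).symm]
    · have h9 : x 9 = 0 := (hzero 9 (by omega)).2 ⟨1, hP1.symm⟩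
      have h10 : x 10 ≠ 0 := fun h => by
        obtain ⟨k, hk⟩ := (heven 4 le_rfl).1 h
        have := hP5 k
        omega
      interval_cases i <;> simp [hsmall, h9, h10]
  intro i hi
  induction i, hi using Nat.le_induction with
  | base => simp [extractInf, List.range_succ, List.count_cons, hsmall]
  | succ i hi ih =>
    have := count_extractInf_succ x 0 i
    have := hstep i hi
    omega
end

section
/- Over the binary alphabet {0,1}, the longest self-avoiding word (in the subsequence sense) has length 11: there exists a self-avoiding binary word of length 11, and no binary word of length 12 is self-avoiding. -/
/-- The factor `x[i..2i]` of a 1-indexed finite word `x`. -/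
def factorAt {α : Type*} (x : List α) (i : ℕ) : List α :=
  (x.drop (i - 1)).take (i + 1)

/-- A finite word `x` of length `n` is self-avoiding (in the subsequence sense) if
for all `i, j` with `1 ≤ i < j` and `2j ≤ n`, the word `x[i..2i]` is not a
subsequence of `x[j..2j]`. -/
def SelfAvoiding {α : Type*} (x : List α) : Prop :=
  ∀ i j : ℕ, 1 ≤ i → i < j → 2 * j ≤ x.length → ¬ List.Sublist (factorAt x i) (factorAt x j)

/-- Self-avoidance involves only finitely many pairs of factors. -/
theorem selfAvoiding_iff_bounded {α : Type*} (x : List α) :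
    SelfAvoiding x ↔ ∀ j < x.length / 2 + 1, ∀ i < j, 1 ≤ i →
      ¬ List.Sublist (factorAt x i) (factorAt x j) :=
  ⟨fun h j hj i hij hi => h i j hi hij (by omega),
    fun h i j hi hij hj => h j (by omega) i hij hi⟩

instance SelfAvoiding.decidable {α : Type*} [DecidableEq α] (x : List α) :
    Decidable (SelfAvoiding x) :=
  decidable_of_iff _ (selfAvoiding_iff_bounded x).symm

/-- Self-avoidance passes to prefixes. -/
theorem SelfAvoiding.of_append {α : Type*} {x y : List α} (h : SelfAvoiding (x ++ y)) :
    SelfAvoiding x := by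
  have factorAt_append : ∀ i, 1 ≤ i → 2 * i ≤ x.length → factorAt (x ++ y) i = factorAt x i := by
    intro i hi hix
    unfold factorAt
    rw [List.drop_append_of_le_length (by omega),
      List.take_append_of_le_length (by rw [List.length_drop]; omega)]
  intro i j hi hij hj
  rw [← factorAt_append i hi (by omega), ← factorAt_append j (by omega) hj]
  exact h i j hi hij (by rw [List.length_append]; omega)

/-- Search for self-avoiding words of length 12, discarding every word as soon as one of its
prefixes of even length fails to be self-avoiding. -/
theorem not_selfAvoiding_of_prefixes : ∀ a b c d : Fin 2, SelfAvoiding [a, b, c, d] →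
    ∀ e f : Fin 2, SelfAvoiding [a, b, c, d, e, f] →
    ∀ g h : Fin 2, SelfAvoiding [a, b, c, d, e, f, g, h] →
    ∀ i j : Fin 2, SelfAvoiding [a, b, c, d, e, f, g, h, i, j] →
    ∀ k l : Fin 2, ¬ SelfAvoiding [a, b, c, d, e, f, g, h, i, j, k, l] := by
  decide +kernel

theorem stmt_19 :
    (∃ x : List (Fin 2), x.length = 11 ∧ SelfAvoiding x) ∧
    (∀ x : List (Fin 2), x.length = 12 → ¬ SelfAvoiding x) := by
  refine ⟨⟨[0, 1, 1, 1, 0, 0, 0, 0, 0, 0, 0], rfl, by decide +kernel⟩, fun x hx => ?_⟩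
  match x, hx with
  | [a, b, c, d, e, f, g, h, i, j, k, l], _ =>
    intro hw
    exact not_selfAvoiding_of_prefixes a b c d (hw.of_append (y := [e, f, g, h, i, j, k, l]))
      e f (hw.of_append (y := [g, h, i, j, k, l])) g h (hw.of_append (y := [i, j, k, l]))
      i j (hw.of_append (y := [k, l])) k l hw
end
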